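/- arXiv:2604.21135 — 3 statements merged into one kernel-verified Lean document; each statement's English description precedes it below -/
import Mathlib

section
/- Let S be the signed double star consisting of a negative central edge z₁z₂, together with l ≥ 0 positive pendant edges z₁v₁,…,z₁v_l attached at z₁ and r ≥ 0 positive pendant edges z₂w₁,…,z₂w_r attached at z₂ (so S is a (l+r+2, l+r, 1) signed graph). Then S is additively graceful if and only if l = 0 or r = 0. -/
/-- A signed graph on vertex type `V`: a finite set of positive edges and a
finite set of negative edges, disjoint from one another, with no loops. -/
structure SignedGraph (V : Type) [DecidableEq V] where
  posEdges : Finset (Sym2 V)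
  negEdges : Finset (Sym2 V)
  disjoint : Disjoint posEdges negEdges
  pos_not_diag : ∀ e ∈ posEdges, ¬ e.IsDiag
  neg_not_diag : ∀ e ∈ negEdges, ¬ e.IsDiag

/-- Induced label on a positive edge: `|f u - f v|`. -/
def posLabel {V : Type} (f : V → ℕ) : Sym2 V → ℕ :=
  Sym2.lift ⟨fun u v => Nat.dist (f u) (f v), fun u v => Nat.dist_comm _ _⟩

/-- Induced label on a negative edge: `f u + f v`. -/
def negLabel {V : Type} (f : V → ℕ) : Sym2 V → ℕ :=
  Sym2.lift ⟨fun u v => f u + f v, fun u v => Nat.add_comm _ _⟩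

/-- `f` is an additively graceful labeling of the signed graph `S`:
it is an injection into `{0, 1, …, m + ⌈(n+1)/2⌉}` whose induced labels on the
positive edges are exactly `{1, …, m}` and on the negative edges exactly
`{1, …, n}`, where `m` (resp. `n`) is the number of positive (negative) edges.
(Note that `⌈(n+1)/2⌉ = (n+2)/2` with natural-number division.) -/
def IsAddGraceful {V : Type} [DecidableEq V] (S : SignedGraph V) (f : V → ℕ) : Prop :=
  Function.Injective f ∧
  (∀ v : V, f v ≤ S.posEdges.card + (S.negEdges.card + 2) / 2) ∧
  S.posEdges.image (posLabel f) = Finset.Icc 1 S.posEdges.card ∧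
  S.negEdges.image (negLabel f) = Finset.Icc 1 S.negEdges.card

/-- Vertex type of a double star: the two centers `z₁, z₂`, the `a` positive
pendant neighbours and `b` negative pendant neighbours of `z₁`, and the `c`
positive pendant neighbours of `z₂`. -/
abbrev DSV (a b c : ℕ) : Type := (Unit ⊕ Unit) ⊕ (Fin a ⊕ Fin b ⊕ Fin c)

/-- the first central vertex `z₁` -/
def z1 {a b c : ℕ} : DSV a b c := Sum.inl (Sum.inl ())
/-- the second central vertex `z₂` -/
def z2 {a b c : ℕ} : DSV a b c := Sum.inl (Sum.inr ())
/-- the end `vᵢ` of the `i`-th positive pendant edge at `z₁` -/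
def vv {a b c : ℕ} (i : Fin a) : DSV a b c := Sum.inr (Sum.inl i)
/-- the end `uᵢ` of the `i`-th negative pendant edge at `z₁` -/
def uu {a b c : ℕ} (i : Fin b) : DSV a b c := Sum.inr (Sum.inr (Sum.inl i))
/-- the end `wᵢ` of the `i`-th positive pendant edge at `z₂` -/
def ww {a b c : ℕ} (i : Fin c) : DSV a b c := Sum.inr (Sum.inr (Sum.inr i))

/-- The signed double star with a *positive* central edge `z₁z₂`,
`a` positive and `b` negative pendant edges at `z₁`, and `c` positive pendant
edges at `z₂`. -/
def doubleStarPos (a b c : ℕ) : SignedGraph (DSV a b c) where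
  posEdges :=
    {s(z1, z2)} ∪ Finset.univ.image (fun i : Fin a => s(z1, vv i)) ∪
      Finset.univ.image (fun i : Fin c => s(z2, ww i))
  negEdges := Finset.univ.image (fun i : Fin b => s(z1, uu i))
  disjoint := by
    rw [Finset.disjoint_left]
    intro e he1 he2
    simp only [Finset.mem_union, Finset.mem_singleton, Finset.mem_image,
      Finset.mem_univ, true_and] at he1 he2
    obtain ⟨j, rfl⟩ := he2
    rcases he1 with (h | ⟨i, h⟩) | ⟨i, h⟩ <;>
      simp [z1, z2, vv, uu, ww, Sym2.eq_iff] at h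
  pos_not_diag := by
    intro e he
    simp only [Finset.mem_union, Finset.mem_singleton, Finset.mem_image,
      Finset.mem_univ, true_and] at he
    rcases he with (rfl | ⟨i, rfl⟩) | ⟨i, rfl⟩ <;>
      simp [z1, z2, vv, ww, Sym2.mk_isDiag_iff]
  neg_not_diag := by
    intro e he
    simp only [Finset.mem_image, Finset.mem_univ, true_and] at he
    obtain ⟨i, rfl⟩ := he
    simp [z1, uu, Sym2.mk_isDiag_iff]

/-- The signed double star with a *negative* central edge `z₁z₂`,
`a` positive and `b` negative pendant edges at `z₁`, and `c` positive pendant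
edges at `z₂`. -/
def doubleStarNeg (a b c : ℕ) : SignedGraph (DSV a b c) where
  posEdges :=
    Finset.univ.image (fun i : Fin a => s(z1, vv i)) ∪
      Finset.univ.image (fun i : Fin c => s(z2, ww i))
  negEdges := {s(z1, z2)} ∪ Finset.univ.image (fun i : Fin b => s(z1, uu i))
  disjoint := by
    rw [Finset.disjoint_left]
    intro e he1 he2
    simp only [Finset.mem_union, Finset.mem_singleton, Finset.mem_image,
      Finset.mem_univ, true_and] at he1 he2
    rcases he1 with ⟨i, rfl⟩ | ⟨i, rfl⟩ <;>
      rcases he2 with h | ⟨j, h⟩ <;>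
      simp [z1, z2, vv, uu, ww, Sym2.eq_iff] at h
  pos_not_diag := by
    intro e he
    simp only [Finset.mem_union, Finset.mem_singleton, Finset.mem_image,
      Finset.mem_univ, true_and] at he
    rcases he with ⟨i, rfl⟩ | ⟨i, rfl⟩ <;>
      simp [z1, z2, vv, ww, Sym2.mk_isDiag_iff]
  neg_not_diag := by
    intro e he
    simp only [Finset.mem_union, Finset.mem_singleton, Finset.mem_image,
      Finset.mem_univ, true_and] at he
    rcases he with rfl | ⟨i, rfl⟩ <;>
      simp [z1, z2, uu, Sym2.mk_isDiag_iff]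

/-!
The negative edge has label `1`, so the centers carry `0` and `1`. The `l + r + 2` vertices fill
`{0, …, l + r + 1}`, hence the pendant vertices carry `2, …, l + r + 1`, with sum `l + r` more than
the sum `1 + … + (l + r)` of the positive edge labels. Passing from a pendant vertex to its edge
lowers the label by that of the center, so `l * f z₁ + r * f z₂ = l + r`: every pendant vertex
hangs at the center labelled `1`. Conversely, if all of them do, the labels `2, …, l + r + 1` in
any order give a graceful labeling.
-/

open Finset

theorem two_le_of_add_eq_one {V : Type*} {f : V → ℕ} (hf : Function.Injective f) {u v w : V}
    (huv : f u + f v = 1) (hwu : w ≠ u) (hwv : w ≠ v) : 2 ≤ f w := by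
  have hu : f w ≠ f u := hf.ne hwu
  have hv : f w ≠ f v := hf.ne hwv
  omega

theorem posLabel_mk_of_le {V : Type} {f : V → ℕ} {u v : V} (h : f u ≤ f v) :
    posLabel f s(u, v) = f v - f u :=
  Nat.dist_eq_sub_of_le h

theorem sum_posLabel_add_card_mul {V : Type} {ι : Type*} {f : V → ℕ} {z : V} {s : Finset ι}
    {p : ι → V} (h : ∀ i ∈ s, f z ≤ f (p i)) :
    ∑ i ∈ s, posLabel f s(z, p i) + #s * f z = ∑ i ∈ s, f (p i) := by
  rw [← smul_eq_mul, ← sum_const, ← sum_add_distrib]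
  refine sum_congr rfl fun i hi => ?_
  rw [posLabel_mk_of_le (h i hi), Nat.sub_add_cancel (h i hi)]

namespace IsAddGraceful

variable {V : Type} [DecidableEq V] {S : SignedGraph V} {f : V → ℕ}

theorem injOn_posLabel (hf : IsAddGraceful S f) : Set.InjOn (posLabel f) S.posEdges := by
  obtain ⟨-, -, hpos, -⟩ := hf
  rw [← card_image_iff, hpos, Nat.card_Icc, Nat.add_sub_cancel]

theorem sum_posLabel_eq_sum_range (hf : IsAddGraceful S f) :
    ∑ e ∈ S.posEdges, posLabel f e = ∑ k ∈ range (#S.posEdges + 1), k := by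
  have hpos : S.posEdges.image (posLabel f) = Icc 1 #S.posEdges := hf.2.2.1
  calc ∑ e ∈ S.posEdges, posLabel f e
      = ∑ k ∈ Icc 1 #S.posEdges, k := by rw [← hpos, sum_image hf.injOn_posLabel]
    _ = ∑ k ∈ range (#S.posEdges + 1), k :=
        sum_subset (fun k => by simp only [mem_Icc, mem_range]; omega)
          (fun k => by simp only [mem_Icc, mem_range]; omega)

theorem add_eq_one_of_negEdges_eq {u v : V} (hf : IsAddGraceful S f) (hS : S.negEdges = {s(u, v)}) :
    f u + f v = 1 := by
  obtain ⟨-, -, -, hneg⟩ := hf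
  simpa [hS, negLabel] using hneg

theorem image_univ_eq_range [Fintype V] (hf : IsAddGraceful S f)
    (hV : Fintype.card V = #S.posEdges + (#S.negEdges + 2) / 2 + 1) :
    univ.image f = range (Fintype.card V) := by
  obtain ⟨hinj, hle, -, -⟩ := hf
  refine eq_of_subset_of_card_le (image_subset_iff.2 fun v _ => ?_) ?_
  · rw [mem_range, hV]
    exact Nat.lt_succ_of_le (hle v)
  · rw [card_image_of_injective _ hinj, card_range, card_univ]

theorem sum_eq_sum_range [Fintype V] (hf : IsAddGraceful S f)
    (hV : Fintype.card V = #S.posEdges + (#S.negEdges + 2) / 2 + 1) :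
    ∑ v, f v = ∑ k ∈ range (Fintype.card V), k := by
  rw [← hf.image_univ_eq_range hV, sum_image hf.1.injOn]

end IsAddGraceful

section DoubleStar

variable {a b c : ℕ}

/-- The positive pendant edges of a double star, those at `z₁` being indexed by the left summand
and those at `z₂` by the right one. -/
def pendantEdge : Fin a ⊕ Fin c → Sym2 (DSV a b c) :=
  Sum.elim (fun i => s(z1, vv i)) (fun j => s(z2, ww j))

theorem pendantEdge_injective :
    Function.Injective (pendantEdge : Fin a ⊕ Fin c → Sym2 (DSV a b c)) := by
  rintro (i | i) (j | j) h <;> simp_all [pendantEdge, z1, z2, vv, ww]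

theorem doubleStarNeg_posEdges : (doubleStarNeg a b c).posEdges = univ.image pendantEdge := by
  ext e
  simp [doubleStarNeg, pendantEdge]

theorem card_doubleStarNeg_posEdges : #(doubleStarNeg a b c).posEdges = a + c := by
  simp [doubleStarNeg_posEdges, card_image_of_injective _ pendantEdge_injective]

theorem sum_doubleStarNeg_posEdges {M : Type*} [AddCommMonoid M] (g : Sym2 (DSV a b c) → M) :
    ∑ e ∈ (doubleStarNeg a b c).posEdges, g e = ∑ i, g s(z1, vv i) + ∑ j, g s(z2, ww j) := by
  rw [doubleStarNeg_posEdges, sum_image pendantEdge_injective.injOn, Fintype.sum_sum_type]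
  rfl

theorem doubleStarNeg_negEdges : (doubleStarNeg a 0 c).negEdges = {s(z1, z2)} := by
  simp [doubleStarNeg]

theorem sum_doubleStar_vertices {M : Type*} [AddCommMonoid M] (f : DSV a b c → M) :
    ∑ v, f v = f z1 + f z2 + (∑ i, f (vv i) + (∑ i, f (uu i) + ∑ j, f (ww j))) := by
  simp [Fintype.sum_sum_type, z1, z2, vv, uu, ww]

end DoubleStar

section NegativeCenter

variable {l r : ℕ}

theorem IsAddGraceful.mul_add_mul_eq_add {f : DSV l 0 r → ℕ}
    (hf : IsAddGraceful (doubleStarNeg l 0 r) f) : l * f z1 + r * f z2 = l + r := by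
  have hcenters : f z1 + f z2 = 1 := hf.add_eq_one_of_negEdges_eq doubleStarNeg_negEdges
  have hz1 : f z1 ≤ 2 := by omega
  have hz2 : f z2 ≤ 2 := by omega
  have hv (i : Fin l) : 2 ≤ f (vv i) :=
    two_le_of_add_eq_one hf.1 hcenters (by simp [vv, z1]) (by simp [vv, z2])
  have hw (j : Fin r) : 2 ≤ f (ww j) :=
    two_le_of_add_eq_one hf.1 hcenters (by simp [ww, z1]) (by simp [ww, z2])
  have hsum_v : ∑ i, posLabel f s(z1, vv i) + l * f z1 = ∑ i, f (vv i) := by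
    simpa using sum_posLabel_add_card_mul (s := univ) fun i _ => hz1.trans (hv i)
  have hsum_w : ∑ j, posLabel f s(z2, ww j) + r * f z2 = ∑ j, f (ww j) := by
    simpa using sum_posLabel_add_card_mul (s := univ) fun j _ => hz2.trans (hw j)
  have hedges : ∑ i, posLabel f s(z1, vv i) + ∑ j, posLabel f s(z2, ww j) =
      ∑ k ∈ range (l + r + 1), k := by
    rw [← sum_doubleStarNeg_posEdges, hf.sum_posLabel_eq_sum_range, card_doubleStarNeg_posEdges]
  have hcard : Fintype.card (DSV l 0 r) = l + r + 2 := by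
    simp only [Fintype.card_sum, Fintype.card_unit, Fintype.card_fin]
    omega
  have hvertices : f z1 + f z2 + (∑ i, f (vv i) + ∑ j, f (ww j)) =
      ∑ k ∈ range (l + r + 2), k := by
    rw [← hcard, ← hf.sum_eq_sum_range
      (by rw [hcard, card_doubleStarNeg_posEdges, doubleStarNeg_negEdges, card_singleton]),
      sum_doubleStar_vertices, univ_eq_empty (α := Fin 0), sum_empty, zero_add]
  rw [sum_range_succ] at hvertices
  omega

/-- The labeling of a double star without negative pendant edges by `p` and `q` at the centers
`z₁` and `z₂`, and by `2, …, l + r + 1` at the pendant vertices, those at `z₁` coming first.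
It is meant for `{p, q} = {0, 1}`, with every pendant vertex at the center labelled `1`. -/
def consecutiveLabeling (p q : ℕ) : DSV l 0 r → ℕ :=
  Sum.elim (Sum.elim (fun _ => p) (fun _ => q))
    (Sum.elim (fun i => i + 2) (Sum.elim Fin.elim0 (fun j => l + j + 2)))

variable {p q : ℕ}

theorem consecutiveLabeling_injective (hpq : p + q = 1) :
    Function.Injective (consecutiveLabeling p q : DSV l 0 r → ℕ) := by
  have hcenters : Function.Injective (Sum.elim (fun _ : Unit => p) (fun _ : Unit => q)) :=
    (Function.injective_of_subsingleton _).sumElim (Function.injective_of_subsingleton _)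
      fun _ _ => by omega
  have hv : Function.Injective fun i : Fin l => (i : ℕ) + 2 := fun _ _ h =>
    Fin.ext (Nat.add_right_cancel h)
  have hw : Function.Injective fun j : Fin r => l + j + 2 := fun _ _ h =>
    Fin.ext (Nat.add_left_cancel (Nat.add_right_cancel h))
  have huw : Function.Injective (Sum.elim Fin.elim0 fun j : Fin r => l + j + 2) :=
    (Function.injective_of_subsingleton _).sumElim hw fun i => i.elim0
  refine hcenters.sumElim (hv.sumElim huw ?_) ?_
  · rintro i (j | j)
    · exact j.elim0
    · simp only [Sum.elim_inr]
      omega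
  · rintro (x | x) (i | i | j)
    case inl.inr.inl | inr.inr.inl => exact i.elim0
    all_goals simp only [Sum.elim_inl, Sum.elim_inr]; omega

theorem consecutiveLabeling_le (hpq : p + q = 1) (v : DSV l 0 r) :
    consecutiveLabeling p q v ≤ l + r + 1 := by
  rcases v with (v | v) | (v | v | v)
  case inr.inr.inl => exact v.elim0
  all_goals simp only [consecutiveLabeling, Sum.elim_inl, Sum.elim_inr]; omega

theorem posLabel_consecutiveLabeling_pendantEdge (hl : l = 0 ∨ p = 1) (hr : r = 0 ∨ q = 1)
    (i : Fin l ⊕ Fin r) :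
    posLabel (consecutiveLabeling p q) (pendantEdge i) = finSumFinEquiv i + 1 := by
  rcases i with i | j
  · obtain rfl : p = 1 := hl.resolve_left i.pos.ne'
    exact Nat.dist_eq_sub_of_le (Nat.le_add_left 1 (i + 1))
  · obtain rfl : q = 1 := hr.resolve_left j.pos.ne'
    exact Nat.dist_eq_sub_of_le (Nat.le_add_left 1 (l + j + 1))

theorem image_posLabel_consecutiveLabeling (hl : l = 0 ∨ p = 1) (hr : r = 0 ∨ q = 1) :
    (doubleStarNeg l 0 r).posEdges.image (posLabel (consecutiveLabeling p q)) =
      Icc 1 (l + r) := by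
  rw [doubleStarNeg_posEdges, image_image]
  ext k
  simp only [mem_image, mem_univ, true_and, Function.comp_apply, mem_Icc,
    posLabel_consecutiveLabeling_pendantEdge hl hr]
  constructor
  · rintro ⟨i, rfl⟩
    exact ⟨Nat.le_add_left 1 _, (finSumFinEquiv i).isLt⟩
  · rintro ⟨hk, hk'⟩
    exact ⟨finSumFinEquiv.symm ⟨k - 1, by omega⟩, by
      rw [Equiv.apply_symm_apply, Nat.sub_add_cancel hk]⟩

theorem isAddGraceful_consecutiveLabeling (hpq : p + q = 1) (hl : l = 0 ∨ p = 1)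
    (hr : r = 0 ∨ q = 1) : IsAddGraceful (doubleStarNeg l 0 r) (consecutiveLabeling p q) := by
  refine ⟨consecutiveLabeling_injective hpq, fun v => ?_, ?_, ?_⟩
  · rw [card_doubleStarNeg_posEdges, doubleStarNeg_negEdges, card_singleton]
    exact consecutiveLabeling_le hpq v
  · rw [card_doubleStarNeg_posEdges]
    exact image_posLabel_consecutiveLabeling hl hr
  · simpa [doubleStarNeg_negEdges, negLabel, consecutiveLabeling, z1, z2] using hpq

end NegativeCenter

/-- The signed double star with negative central edge `z₁z₂`,
`l` positive pendant edges at `z₁` and `r` positive pendant edges at `z₂`, is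
additively graceful if and only if `l = 0` or `r = 0`. -/
theorem doubleStar_negCenter_addGraceful_iff (l r : ℕ) :
    (∃ f : DSV l 0 r → ℕ, IsAddGraceful (doubleStarNeg l 0 r) f) ↔ l = 0 ∨ r = 0 := by
  constructor
  · rintro ⟨f, hf⟩
    have hcenters : f z1 + f z2 = 1 := hf.add_eq_one_of_negEdges_eq doubleStarNeg_negEdges
    have hweighted : l * f z1 + r * f z2 = l + r := hf.mul_add_mul_eq_add
    obtain ⟨hz1, hz2⟩ | ⟨hz1, hz2⟩ := Nat.add_eq_one_iff.1 hcenters <;>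
      rw [hz1, hz2] at hweighted <;> omega
  · rintro (hl | hr)
    · exact ⟨_, isAddGraceful_consecutiveLabeling (zero_add 1) (.inl hl) (.inr rfl)⟩
    · exact ⟨_, isAddGraceful_consecutiveLabeling (add_zero 1) (.inr rfl) (.inl hr)⟩
end

section
/- Let S(l,r) be the signed double star consisting of a positive central edge z₁z₂, together with l positive pendant edges z₁v₁,…,z₁v_l and two negative pendant edges z₁u₁, z₁u₂ attached at z₁, and r positive pendant edges z₂w₁,…,z₂w_r attached at z₂ (so S(l,r) is a (l+r+4, l+r+1, 2) signed graph). If r < 2, then S(l,r) is not additively graceful. -/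
/-!
Suppose that the `n ≥ 2` negative edges all share the vertex `z`. The negative labels `1` and `2`
force `f z = 0`, so the other ends of the negative edges carry the labels `1, …, n`, and every
further vertex has a label above `n`. A positive edge at `z` is therefore labelled above `n`, and
the positive labels up to `n` have to come from positive edges avoiding `z`. In the double star
these are the pendant edges at `z₂`.
-/

namespace IsAddGraceful

variable {V : Type} [DecidableEq V] {S : SignedGraph V} {f : V → ℕ} {z x : V} {e : Sym2 V} {k : ℕ}

theorem exists_mem_posEdges_posLabel_eq (h : IsAddGraceful S f)
    (hk : k ∈ Finset.Icc 1 S.posEdges.card) : ∃ e ∈ S.posEdges, posLabel f e = k := by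
  obtain ⟨-, -, hpos, -⟩ := h
  rwa [← hpos, Finset.mem_image] at hk

theorem exists_mem_negEdges_add_eq (h : IsAddGraceful S f) (hz : ∀ e ∈ S.negEdges, z ∈ e)
    (hk : k ∈ Finset.Icc 1 S.negEdges.card) : ∃ x, s(z, x) ∈ S.negEdges ∧ f z + f x = k := by
  obtain ⟨-, -, -, hneg⟩ := h
  rw [← hneg, Finset.mem_image] at hk
  obtain ⟨e, he, hek⟩ := hk
  obtain ⟨x, rfl⟩ := hz e he
  exact ⟨x, he, hek⟩

theorem apply_center_eq_zero (h : IsAddGraceful S f) (hz : ∀ e ∈ S.negEdges, z ∈ e)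
    (hn : 2 ≤ S.negEdges.card) : f z = 0 := by
  obtain ⟨x, -, hx⟩ :=
    h.exists_mem_negEdges_add_eq hz (Finset.mem_Icc.mpr ⟨le_rfl, one_le_two.trans hn⟩)
  obtain ⟨y, hy_mem, hy⟩ := h.exists_mem_negEdges_add_eq hz (Finset.mem_Icc.mpr ⟨one_le_two, hn⟩)
  have hzy : f z ≠ f y := h.1.ne fun hzy ↦ S.neg_not_diag _ hy_mem (Sym2.mk_isDiag_iff.mpr hzy)
  -- `f z = 1` would give `f y = 1` as well.
  omega

theorem mk_mem_negEdges_of_apply_le (h : IsAddGraceful S f) (hz : ∀ e ∈ S.negEdges, z ∈ e)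
    (hn : 2 ≤ S.negEdges.card) (hxz : x ≠ z) (hx : f x ≤ S.negEdges.card) :
    s(z, x) ∈ S.negEdges := by
  have hfz : f z = 0 := h.apply_center_eq_zero hz hn
  have hx_pos : 1 ≤ f x := Nat.one_le_iff_ne_zero.mpr (hfz ▸ h.1.ne hxz)
  obtain ⟨y, hy_mem, hy⟩ := h.exists_mem_negEdges_add_eq hz (Finset.mem_Icc.mpr ⟨hx_pos, hx⟩)
  rw [hfz, zero_add] at hy
  rwa [h.1 hy] at hy_mem

theorem card_negEdges_lt_posLabel (h : IsAddGraceful S f) (hz : ∀ e ∈ S.negEdges, z ∈ e)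
    (hn : 2 ≤ S.negEdges.card) (he : e ∈ S.posEdges) (hze : z ∈ e) :
    S.negEdges.card < posLabel f e := by
  obtain ⟨x, rfl⟩ := hze
  have hxz : x ≠ z := fun hxz ↦ S.pos_not_diag _ he (Sym2.mk_isDiag_iff.mpr hxz.symm)
  have hlabel : posLabel f s(z, x) = f x := by
    simp only [posLabel, Sym2.lift_mk, h.apply_center_eq_zero hz hn, Nat.dist_zero_left]
  rw [hlabel]
  by_contra! hx
  exact Finset.disjoint_left.mp S.disjoint he (h.mk_mem_negEdges_of_apply_le hz hn hxz hx)

theorem card_negEdges_le_card_posEdges_filter_notMem (h : IsAddGraceful S f)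
    (hz : ∀ e ∈ S.negEdges, z ∈ e) (hn : 2 ≤ S.negEdges.card) (he : e ∈ S.posEdges)
    (hze : z ∈ e) : S.negEdges.card ≤ (S.posEdges.filter (z ∉ ·)).card := by
  have hlabels : Finset.Icc 1 (min S.posEdges.card S.negEdges.card) ⊆
      (S.posEdges.filter (z ∉ ·)).image (posLabel f) := by
    intro k hk
    obtain ⟨hk_pos, hk_le⟩ := Finset.mem_Icc.mp hk
    obtain ⟨hk_le_pos, hk_le_neg⟩ := le_min_iff.mp hk_le
    obtain ⟨e', he', rfl⟩ :=
      h.exists_mem_posEdges_posLabel_eq (Finset.mem_Icc.mpr ⟨hk_pos, hk_le_pos⟩)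
    have hze' : z ∉ e' := fun hze' ↦
      (h.card_negEdges_lt_posLabel hz hn he' hze').not_ge hk_le_neg
    exact Finset.mem_image_of_mem _ (Finset.mem_filter.mpr ⟨he', hze'⟩)
  have hmin : min S.posEdges.card S.negEdges.card ≤ (S.posEdges.filter (z ∉ ·)).card := by
    simpa only [Nat.card_Icc, Nat.add_sub_cancel] using
      (Finset.card_le_card hlabels).trans Finset.card_image_le
  have hlt : (S.posEdges.filter (z ∉ ·)).card < S.posEdges.card :=
    Finset.card_lt_card (Finset.filter_ssubset.mpr ⟨e, he, not_not_intro hze⟩)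
  exact (min_le_iff.mp hmin).resolve_left hlt.not_ge

end IsAddGraceful

section DoubleStar

variable {a b c : ℕ}

theorem card_negEdges_doubleStarPos : (doubleStarPos a b c).negEdges.card = b := by
  have huu : Function.Injective fun i : Fin b ↦ (s(z1, uu i) : Sym2 (DSV a b c)) := by
    intro i j hij
    simpa only [Sym2.congr_right, uu, Sum.inr.injEq, Sum.inl.injEq] using hij
  simp only [doubleStarPos, Finset.card_image_of_injective _ huu, Finset.card_univ,
    Fintype.card_fin]

theorem z1_mem_of_mem_negEdges_doubleStarPos {e : Sym2 (DSV a b c)}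
    (he : e ∈ (doubleStarPos a b c).negEdges) : z1 ∈ e := by
  obtain ⟨i, -, rfl⟩ := Finset.mem_image.mp he
  exact Sym2.mem_mk_left _ _

theorem mk_z1_z2_mem_posEdges_doubleStarPos : s(z1, z2) ∈ (doubleStarPos a b c).posEdges := by
  simp [doubleStarPos]

theorem card_posEdges_doubleStarPos_filter_z1_notMem_le :
    ((doubleStarPos a b c).posEdges.filter (z1 ∉ ·)).card ≤ c := by
  have hsub : (doubleStarPos a b c).posEdges.filter (z1 ∉ ·) ⊆
      Finset.univ.image fun i : Fin c ↦ s(z2, ww i) := by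
    intro e he
    obtain ⟨he, hz1⟩ := Finset.mem_filter.mp he
    refine (Finset.mem_union.mp he).resolve_left fun hcenter ↦ hz1 ?_
    rcases Finset.mem_union.mp hcenter with hz2 | hvv
    · exact Finset.mem_singleton.mp hz2 ▸ Sym2.mem_mk_left _ _
    · obtain ⟨i, -, rfl⟩ := Finset.mem_image.mp hvv
      exact Sym2.mem_mk_left _ _
  calc ((doubleStarPos a b c).posEdges.filter (z1 ∉ ·)).card
      ≤ (Finset.univ.image fun i : Fin c ↦ (s(z2, ww i) : Sym2 (DSV a b c))).card :=
        Finset.card_le_card hsub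
    _ ≤ (Finset.univ : Finset (Fin c)).card := Finset.card_image_le
    _ = c := Finset.card_fin c

end DoubleStar

theorem doubleStar_twoNeg_not_addGraceful_of_r_lt_two_general (l n r : ℕ) (hn : 2 ≤ n)
    (hr : r < n) : ¬ ∃ f : DSV l n r → ℕ, IsAddGraceful (doubleStarPos l n r) f := by
  rintro ⟨f, hf⟩
  have hcard : (doubleStarPos l n r).negEdges.card = n := card_negEdges_doubleStarPos
  have hle : n ≤ ((doubleStarPos l n r).posEdges.filter (z1 ∉ ·)).card := by
    simpa only [hcard] using hf.card_negEdges_le_card_posEdges_filter_notMem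
      (fun _ ↦ z1_mem_of_mem_negEdges_doubleStarPos) (hcard.symm ▸ hn)
      mk_z1_z2_mem_posEdges_doubleStarPos (Sym2.mem_mk_left z1 z2)
  exact (hle.trans card_posEdges_doubleStarPos_filter_z1_notMem_le).not_gt hr

/-- The signed double star with positive central edge `z₁z₂`,
`l` positive and `2` negative pendant edges at `z₁`, and `r` positive pendant
edges at `z₂`, is not additively graceful when `r < 2`. -/
theorem doubleStar_twoNeg_not_addGraceful_of_r_lt_two (l r : ℕ) (hr : r < 2) :
    ¬ ∃ f : DSV l 2 r → ℕ, IsAddGraceful (doubleStarPos l 2 r) f :=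
  doubleStar_twoNeg_not_addGraceful_of_r_lt_two_general l 2 r le_rfl hr
end

section
/- Let S(2,r) be the signed double star consisting of a positive central edge z₁z₂, together with 2 positive pendant edges z₁v₁, z₁v₂ and two negative pendant edges z₁u₁, z₁u₂ attached at z₁, and r positive pendant edges z₂w₁,…,z₂w_r attached at z₂ (so S(2,r) is a (r+6, r+3, 2) signed graph). Then for every r ≥ 2, S(2,r) is additively graceful. -/
/-!
Label `z₁` by `0`, so that every pendant edge at `z₁`, of either sign, carries the label of its
leaf, and label `z₂` by the number `m = a + c + 1` of positive edges. The leaves `uᵢ` get `1, …, b`,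
the leaves `vᵢ` get the block `m - a, …, m - 1` just below `m`, which is disjoint from `1, …, b`
when `b ≤ c`, and the leaves at `z₂` have to be put at distances `1, …, c` from `m`. Those at
distance at most `a` go above `m`, to avoid the block; all others go below it, and still stay above
`1, …, b` when `b ≤ a`. The largest label is at most `m + a`, whence the condition
`a ≤ (b + 2) / 2`.
-/

namespace doubleStarPos

variable (a b c : ℕ)

lemma vv_injective : Function.Injective (vv : Fin a → DSV a b c) :=
  Sum.inr_injective.comp Sum.inl_injective

lemma uu_injective : Function.Injective (uu : Fin b → DSV a b c) :=
  Sum.inr_injective.comp (Sum.inr_injective.comp Sum.inl_injective)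

lemma ww_injective : Function.Injective (ww : Fin c → DSV a b c) :=
  Sum.inr_injective.comp (Sum.inr_injective.comp Sum.inr_injective)

lemma card_posEdges : (doubleStarPos a b c).posEdges.card = a + c + 1 := by
  have hv : Function.Injective fun i : Fin a => s((z1 : DSV a b c), vv i) :=
    (Sym2.mkEmbedding z1).injective.comp (vv_injective a b c)
  have hw : Function.Injective fun j : Fin c => s((z2 : DSV a b c), ww j) :=
    (Sym2.mkEmbedding z2).injective.comp (ww_injective a b c)
  simp only [doubleStarPos]
  rw [Finset.card_union_of_disjoint, Finset.card_union_of_disjoint, Finset.card_singleton,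
    Finset.card_image_of_injective _ hv, Finset.card_image_of_injective _ hw,
    Finset.card_fin, Finset.card_fin]
  · omega
  · simp [z1, z2, vv]
  · simp [Finset.disjoint_left, z1, z2, vv, ww]

lemma card_negEdges : (doubleStarPos a b c).negEdges.card = b :=
  (Finset.card_image_of_injective _ <|
    (Sym2.mkEmbedding z1).injective.comp (uu_injective a b c)).trans (Finset.card_fin b)

variable {a b c} (f : DSV a b c → ℕ)

lemma image_posLabel_posEdges :
    (doubleStarPos a b c).posEdges.image (posLabel f) =
      {Nat.dist (f z1) (f z2)} ∪ Finset.univ.image (fun i => Nat.dist (f z1) (f (vv i))) ∪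
        Finset.univ.image (fun j => Nat.dist (f z2) (f (ww j))) := by
  simp only [doubleStarPos, Finset.image_union, Finset.image_singleton, Finset.image_image]
  rfl

lemma image_negLabel_negEdges :
    (doubleStarPos a b c).negEdges.image (negLabel f) =
      Finset.univ.image (fun i => f z1 + f (uu i)) :=
  Finset.image_image

end doubleStarPos

lemma image_fin_val_add (n k : ℕ) :
    Finset.univ.image (fun i : Fin n => (i : ℕ) + k) = Finset.Ico k (n + k) := by
  ext x
  simp only [Finset.mem_image, Finset.mem_univ, true_and, Finset.mem_Ico]
  constructor
  · rintro ⟨i, rfl⟩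
    omega
  · rintro ⟨hkx, hxn⟩
    exact ⟨⟨x - k, by omega⟩, Nat.sub_add_cancel hkx⟩

/-- The point at distance `k` from `m`, on the far side of `m` from `0` when `k ≤ a` and between
`0` and `m` otherwise. It supplies the labels of the leaves around a center labeled `m`. The
subtraction is truncated, so this describes the point only for `k ≤ m`. -/
def offsetLabel (m a k : ℕ) : ℕ :=
  if k ≤ a then m + k else m - k

namespace offsetLabel

lemma dist_eq {m k : ℕ} (a : ℕ) (hk : k ≤ m) : Nat.dist m (offsetLabel m a k) = k := by
  grind [offsetLabel, Nat.dist]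

lemma sub_le (m a k : ℕ) : m - k ≤ offsetLabel m a k := by
  grind [offsetLabel]

lemma le_add (m a k : ℕ) : offsetLabel m a k ≤ m + a := by
  grind [offsetLabel]

lemma lt_sub_or_lt {m k : ℕ} (a : ℕ) (hk₀ : 0 < k) (hk : k ≤ m) :
    offsetLabel m a k < m - a ∨ m < offsetLabel m a k := by
  grind [offsetLabel]

lemma injOn (m a : ℕ) : Set.InjOn (offsetLabel m a) (Set.Iic m) := by
  intro k hk l hl h
  grind [offsetLabel]

end offsetLabel

/-- The labeling `z₁ ↦ 0`, `z₂ ↦ a + c + 1`, `vᵢ ↦ i + (c + 1)`, `uᵢ ↦ i + 1` of the double star,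
with `wⱼ` at distance `j + 1` from the label of `z₂`. -/
def doubleStarLabel (a b c : ℕ) : DSV a b c → ℕ :=
  Sum.elim (Sum.elim (fun _ => 0) (fun _ => a + c + 1))
    (Sum.elim (fun i => i + (c + 1))
      (Sum.elim (fun i => i + 1) (fun j => offsetLabel (a + c + 1) a (j + 1))))

namespace doubleStarLabel

variable {a b c : ℕ}

lemma apply_z1 : doubleStarLabel a b c z1 = 0 := rfl

lemma apply_z2 : doubleStarLabel a b c z2 = a + c + 1 := rfl

lemma apply_vv (i : Fin a) : doubleStarLabel a b c (vv i) = i + (c + 1) := rfl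

lemma apply_uu (i : Fin b) : doubleStarLabel a b c (uu i) = i + 1 := rfl

lemma apply_ww (j : Fin c) :
    doubleStarLabel a b c (ww j) = offsetLabel (a + c + 1) a (j + 1) := rfl

lemma injective (hba : b ≤ a) (hbc : b ≤ c) : Function.Injective (doubleStarLabel a b c) := by
  have hw_gt (j : Fin c) : a < offsetLabel (a + c + 1) a (j + 1) := by
    have := offsetLabel.sub_le (a + c + 1) a (j + 1)
    omega
  have hw_gap (j : Fin c) : offsetLabel (a + c + 1) a (j + 1) < c + 1 ∨
      a + c + 1 < offsetLabel (a + c + 1) a (j + 1) := by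
    have := offsetLabel.lt_sub_or_lt (m := a + c + 1) (k := j + 1) a (by omega) (by omega)
    omega
  have hw_inj : Function.Injective fun j : Fin c => offsetLabel (a + c + 1) a (j + 1) :=
    fun i j h => Fin.ext <| Nat.succ_injective <|
      offsetLabel.injOn _ _ (Set.mem_Iic.2 (by omega)) (Set.mem_Iic.2 (by omega)) h
  have h_shift (n k : ℕ) : Function.Injective fun i : Fin n => (i : ℕ) + k :=
    (add_left_injective k).comp Fin.val_injective
  have h_centers : Function.Injective
      (Sum.elim (fun _ => 0) (fun _ => a + c + 1) : Unit ⊕ Unit → ℕ) :=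
    (Function.injective_of_subsingleton _).sumElim (Function.injective_of_subsingleton _)
      fun _ _ => by omega
  have h_uw := (h_shift b 1).sumElim hw_inj fun i j => by have := hw_gt j; omega
  have h_leaves := (h_shift a (c + 1)).sumElim h_uw <| by
    rintro i (k | j) <;> simp only [Sum.elim_inl, Sum.elim_inr]
    · omega
    · have := hw_gap j
      omega
  refine h_centers.sumElim h_leaves ?_
  rintro (_ | _) (i | i | j) <;> simp only [Sum.elim_inl, Sum.elim_inr]
  case inl.inr.inr => exact (Nat.zero_le a).trans_lt (hw_gt j) |>.ne
  case inr.inr.inr =>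
    have := hw_gap j
    omega
  all_goals omega

lemma le_add (hba : b ≤ a) (x : DSV a b c) : doubleStarLabel a b c x ≤ a + c + 1 + a := by
  rcases x with (_ | _) | i | i | j
  case inr.inr.inr => exact offsetLabel.le_add _ _ _
  all_goals
    simp only [doubleStarLabel, Sum.elim_inl, Sum.elim_inr]
    omega

lemma image_posLabel (a b c : ℕ) :
    (doubleStarPos a b c).posEdges.image (posLabel (doubleStarLabel a b c)) =
      Finset.Icc 1 (a + c + 1) := by
  have hw (j : Fin c) : Nat.dist (a + c + 1) (offsetLabel (a + c + 1) a (j + 1)) = j + 1 :=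
    offsetLabel.dist_eq a (by omega)
  simp only [doubleStarPos.image_posLabel_posEdges, apply_z1, apply_z2, apply_vv, apply_ww, hw,
    Nat.dist_zero_left, image_fin_val_add]
  ext k
  simp only [Finset.mem_union, Finset.mem_singleton, Finset.mem_Ico, Finset.mem_Icc]
  omega

lemma image_negLabel (a b c : ℕ) :
    (doubleStarPos a b c).negEdges.image (negLabel (doubleStarLabel a b c)) =
      Finset.Icc 1 b := by
  simp only [doubleStarPos.image_negLabel_negEdges, apply_z1, apply_uu, Nat.zero_add,
    image_fin_val_add, Finset.Ico_add_one_right_eq_Icc]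

end doubleStarLabel

theorem doubleStar_twoNeg_l2_addGraceful_general {a b c : ℕ}
    (hba : b ≤ a) (hbc : b ≤ c) (hab : a ≤ (b + 2) / 2) :
    IsAddGraceful (doubleStarPos a b c) (doubleStarLabel a b c) := by
  rw [IsAddGraceful, doubleStarPos.card_posEdges, doubleStarPos.card_negEdges]
  exact ⟨doubleStarLabel.injective hba hbc,
    fun v => (doubleStarLabel.le_add hba v).trans (Nat.add_le_add_left hab _),
    doubleStarLabel.image_posLabel a b c, doubleStarLabel.image_negLabel a b c⟩

/-- The signed double star with positive central edge `z₁z₂`,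
`2` positive and `2` negative pendant edges at `z₁`, and `r` positive pendant
edges at `z₂`, is additively graceful for every `r ≥ 2`. -/
theorem doubleStar_twoNeg_l2_addGraceful (r : ℕ) (hr : 2 ≤ r) :
    ∃ f : DSV 2 2 r → ℕ, IsAddGraceful (doubleStarPos 2 2 r) f :=
  ⟨doubleStarLabel 2 2 r, doubleStar_twoNeg_l2_addGraceful_general le_rfl hr le_rfl⟩
end
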